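/- Let K be a field of characteristic different from 2 and let a, b, c, d be nonzero elements of K. Then the following are equivalent: (1) the quaternion algebras ℍ[K,a,b] and ℍ[K,c,d] are isomorphic as K-algebras; (2) the quaternary norm forms ⟨1,−a,−b,ab⟩ and ⟨1,−c,−d,cd⟩ are isometric over K; (3) the ternary pure norm forms ⟨−a,−b,ab⟩ and ⟨−c,−d,cd⟩ are isometric over K. -/

import Mathlib

open Quaternion

/-- The quaternary norm form `⟨1, -a, -b, ab⟩` of the quaternion algebra `ℍ[K, a, b]`. -/
noncomputable def quaternionNormForm (K : Type*) [Field K] (a b : K) :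
    QuadraticForm K (Fin 4 → K) :=
  QuadraticMap.weightedSumSquares K ![1, -a, -b, a * b]

/-- The ternary pure norm form `⟨-a, -b, ab⟩` of the quaternion algebra `ℍ[K, a, b]`. -/
noncomputable def quaternionPureNormForm (K : Type*) [Field K] (a b : K) :
    QuadraticForm K (Fin 3 → K) :=
  QuadraticMap.weightedSumSquares K ![-a, -b, a * b]

/-!
All three conditions are equivalent to the existence of an isometry `g` between the norm forms of
the two algebras with `g 1 = 1`. An algebra isomorphism is one, because it preserves the trace
`4 * re` of left multiplication, hence conjugation and the norm. An arbitrary isometry `f` becomes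
one after left multiplication by the conjugate of `f 1`, which has norm `1`. Since `g` preserves
the polar form with `1`, it is the same thing as an isometry of the forms on pure quaternions.
Finally `g i` and `g j` satisfy the relations of `i` and `j`, while `g i * g j` is orthogonal to
`1`, `g i` and `g j`, so that it equals `z • g k` with `z * z = 1`; hence the algebra map sending
`i` to `g i` and `j` to `g j` is bijective.
-/

open QuadraticMap

section SqProd

variable {R M₁ M₂ : Type*} [CommRing R] [AddCommGroup M₁] [AddCommGroup M₂] [Module R M₁]
  [Module R M₂] {Q₁ : QuadraticForm R M₁} {Q₂ : QuadraticForm R M₂}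

theorem polar_isometryEquiv_apply (f : Q₁.IsometryEquiv Q₂) (x y : M₁) :
    polar Q₂ (f x) (f y) = polar Q₁ x y := by
  have map_add : f (x + y) = f x + f y := f.toLinearEquiv.map_add x y
  rw [polar, ← map_add, f.map_app, f.map_app, f.map_app, polar]

theorem fst_sq_prod_isometryEquiv_apply (h2 : IsRegular (2 : R))
    (f : ((sq (R := R)).prod Q₁).IsometryEquiv (sq.prod Q₂)) (hf : f (1, 0) = (1, 0))
    (x : R × M₁) : (f x).1 = x.1 := by
  have polar_one := polar_isometryEquiv_apply f x (1, 0)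
  simp only [hf, polar, prod_apply, sq_apply, Prod.fst_add, Prod.snd_add, add_zero, map_zero]
    at polar_one
  refine h2.left ?_
  linear_combination polar_one

theorem equivalent_of_sq_prod_isometryEquiv (h2 : IsRegular (2 : R))
    (f : ((sq (R := R)).prod Q₁).IsometryEquiv (sq.prod Q₂)) (hf : f (1, 0) = (1, 0)) :
    Q₁.Equivalent Q₂ := by
  have hf_symm : f.symm (1, 0) = (1, 0) := by rw [← hf, f.symm_apply_apply]
  have map_snd (m : M₁) : (0, (f (0, m)).2) = f (0, m) :=
    Prod.ext (fst_sq_prod_isometryEquiv_apply h2 f hf (0, m)).symm rfl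
  have symm_map_snd (m : M₂) : (0, (f.symm (0, m)).2) = f.symm (0, m) :=
    Prod.ext (fst_sq_prod_isometryEquiv_apply h2 f.symm hf_symm (0, m)).symm rfl
  let toFun : M₁ →ₗ[R] M₂ := .snd R R M₂ ∘ₗ f.toLinearEquiv.toLinearMap ∘ₗ .inr R R M₁
  let invFun : M₂ →ₗ[R] M₁ := .snd R R M₁ ∘ₗ f.symm.toLinearEquiv.toLinearMap ∘ₗ .inr R R M₂
  refine ⟨⟨.ofLinearMap toFun invFun (LinearMap.ext fun m ↦ ?_) (LinearMap.ext fun m ↦ ?_),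
    fun m ↦ ?_⟩⟩
  · change (f (0, (f.symm (0, m)).2)).2 = m
    rw [symm_map_snd, f.apply_symm_apply]
  · change (f.symm (0, (f (0, m)).2)).2 = m
    rw [map_snd, f.symm_apply_apply]
  · change Q₂ (f (0, m)).2 = Q₁ m
    have norm_eq := f.map_app (0, m)
    rw [← map_snd] at norm_eq
    simpa using norm_eq

/-- The splitting `⟨1, w₁, …, wₙ⟩ = ⟨1⟩ ⊥ ⟨w₁, …, wₙ⟩` of a diagonal form, by which the pure part
is separated from the scalars. -/
def weightedSumSquaresConsOneIsometryEquiv {n : ℕ} (w : Fin n → R) :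
    (weightedSumSquares R (Matrix.vecCons 1 w)).IsometryEquiv
      ((sq (R := R)).prod (weightedSumSquares R w)) where
  toLinearEquiv := (Fin.consLinearEquiv R fun _ ↦ R).symm
  map_app' v := by
    simp [weightedSumSquares_apply, Fin.sum_univ_succ, Fin.consLinearEquiv, Fin.tail]

end SqProd

section QuaternionAlgebra

variable {R : Type*} [CommRing R] {a b c d : R}

/-- The norm form as a quadratic form on the quaternion algebra itself rather than on coordinate
vectors. -/
noncomputable def quaternionAlgebraNorm (a b : R) : QuadraticForm R ℍ[R,a,b] :=
  (weightedSumSquares R ![1, -a, -b, a * b]).comp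
    (QuaternionAlgebra.linearEquivTuple a 0 b).toLinearMap

theorem quaternionAlgebraNorm_apply (q : ℍ[R,a,b]) :
    quaternionAlgebraNorm a b q =
      q.re * q.re - a * (q.imI * q.imI) - b * (q.imJ * q.imJ) + a * b * (q.imK * q.imK) := by
  simp only [quaternionAlgebraNorm, comp_apply, LinearEquiv.coe_coe,
    QuaternionAlgebra.coe_linearEquivTuple, QuaternionAlgebra.equivTuple_apply,
    weightedSumSquares_apply, Fin.sum_univ_four, smul_eq_mul, Matrix.cons_val]
  ring

theorem coe_quaternionAlgebraNorm (q : ℍ[R,a,b]) :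
    (quaternionAlgebraNorm a b q : ℍ[R,a,b]) = q * star q := by
  rw [QuaternionAlgebra.mul_star_eq_coe, quaternionAlgebraNorm_apply]
  congr 1
  simp only [QuaternionAlgebra.re_mul, QuaternionAlgebra.re_star, QuaternionAlgebra.imI_star,
    QuaternionAlgebra.imJ_star, QuaternionAlgebra.imK_star]
  ring

theorem quaternionAlgebraNorm_mul (p q : ℍ[R,a,b]) :
    quaternionAlgebraNorm a b (p * q) =
      quaternionAlgebraNorm a b p * quaternionAlgebraNorm a b q := by
  apply QuaternionAlgebra.coe_injective (c₁ := a) (c₂ := 0) (c₃ := b)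
  calc (quaternionAlgebraNorm a b (p * q) : ℍ[R,a,b])
      = p * (q * star q) * star p := by
        rw [coe_quaternionAlgebraNorm, star_mul]; simp only [mul_assoc]
    _ = p * star p * (q * star q) := by
        rw [← coe_quaternionAlgebraNorm q, mul_assoc, mul_assoc, QuaternionAlgebra.coe_commutes]
    _ = _ := by rw [QuaternionAlgebra.coe_mul, coe_quaternionAlgebraNorm, coe_quaternionAlgebraNorm]

theorem quaternionAlgebraNorm_star (q : ℍ[R,a,b]) :
    quaternionAlgebraNorm a b (star q) = quaternionAlgebraNorm a b q := by
  simp [quaternionAlgebraNorm_apply]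

/-- The coordinates with respect to `1, i, j, k`, as an isometry of the norm form. -/
noncomputable def coordIsometryEquiv (a b : R) :
    (quaternionAlgebraNorm a b).IsometryEquiv (weightedSumSquares R ![1, -a, -b, a * b]) where
  toLinearEquiv := QuaternionAlgebra.linearEquivTuple a 0 b
  map_app' _ := rfl

/-- The decomposition of a quaternion algebra into the orthogonal sum of its scalars and its pure
quaternions. -/
noncomputable def scalarPureIsometryEquiv (a b : R) :
    (quaternionAlgebraNorm a b).IsometryEquiv
      ((sq (R := R)).prod (weightedSumSquares R ![-a, -b, a * b])) :=
  (coordIsometryEquiv a b).trans (weightedSumSquaresConsOneIsometryEquiv ![-a, -b, a * b])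

theorem scalarPureIsometryEquiv_one : scalarPureIsometryEquiv a b 1 = (1, 0) :=
  Prod.ext rfl (funext fun i ↦ by fin_cases i <;> rfl)

theorem fst_scalarPureIsometryEquiv_apply (q : ℍ[R,a,b]) :
    (scalarPureIsometryEquiv a b q).1 = q.re :=
  rfl

theorem trace_mulLeft_quaternionAlgebra (q : ℍ[R,a,b]) :
    LinearMap.trace R ℍ[R,a,b] (LinearMap.mulLeft R q) = 4 * q.re := by
  rw [LinearMap.trace_eq_matrix_trace R (QuaternionAlgebra.basisOneIJK a 0 b), Matrix.trace,
    Fin.sum_univ_four]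
  simp only [Matrix.diag_apply, LinearMap.toMatrix_apply, LinearMap.mulLeft_apply,
    QuaternionAlgebra.coe_basisOneIJK_repr]
  simp [QuaternionAlgebra.basisOneIJK, QuaternionAlgebra.equivTuple]
  ring

theorem re_algEquiv_apply (h2 : IsRegular (2 : R)) (φ : ℍ[R,a,b] ≃ₐ[R] ℍ[R,c,d])
    (q : ℍ[R,a,b]) : (φ q).re = q.re := by
  have mulLeft_map :
      LinearMap.mulLeft R (φ q) = φ.toLinearEquiv.conj (LinearMap.mulLeft R q) := by
    ext1 x
    simp [LinearEquiv.conj_apply]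
  have trace_eq := LinearMap.trace_conj' (LinearMap.mulLeft R q) φ.toLinearEquiv
  rw [← mulLeft_map, trace_mulLeft_quaternionAlgebra, trace_mulLeft_quaternionAlgebra] at trace_eq
  refine (h2.mul h2).left ?_
  linear_combination trace_eq

theorem star_algEquiv_apply (h2 : IsRegular (2 : R)) (φ : ℍ[R,a,b] ≃ₐ[R] ℍ[R,c,d])
    (q : ℍ[R,a,b]) : star (φ q) = φ (star q) := by
  have map_coe (r : R) : φ r = r := φ.commutes r
  rw [QuaternionAlgebra.star_eq_two_re_sub, QuaternionAlgebra.star_eq_two_re_sub, map_sub,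
    map_coe, re_algEquiv_apply h2, zero_mul, zero_mul]

/-- An isomorphism of quaternion algebras, as an isometry of their norm forms. -/
noncomputable def algEquivNormIsometryEquiv (h2 : IsRegular (2 : R))
    (φ : ℍ[R,a,b] ≃ₐ[R] ℍ[R,c,d]) :
    (quaternionAlgebraNorm a b).IsometryEquiv (quaternionAlgebraNorm c d) where
  toLinearEquiv := φ.toLinearEquiv
  map_app' q := by
    apply QuaternionAlgebra.coe_injective (c₁ := c) (c₂ := 0) (c₃ := d)
    calc (quaternionAlgebraNorm c d (φ q) : ℍ[R,c,d])
        = φ (q * star q) := by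
          rw [coe_quaternionAlgebraNorm, star_algEquiv_apply h2, map_mul]
      _ = quaternionAlgebraNorm a b q := by
          rw [← coe_quaternionAlgebraNorm]; exact φ.commutes _

theorem polar_quaternionAlgebraNorm (p q : ℍ[R,a,b]) :
    polar (quaternionAlgebraNorm a b) p q = 2 * (p.re * q.re - a * (p.imI * q.imI)
      - b * (p.imJ * q.imJ) + a * b * (p.imK * q.imK)) := by
  simp only [polar, quaternionAlgebraNorm_apply, QuaternionAlgebra.re_add,
    QuaternionAlgebra.imI_add, QuaternionAlgebra.imJ_add, QuaternionAlgebra.imK_add]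
  ring

theorem pureQuaternion_mul_self {q : ℍ[R,a,b]} (hq : q.re = 0) :
    q * q = -(quaternionAlgebraNorm a b q : ℍ[R,a,b]) := by
  have star_q : star q = -q := by rw [QuaternionAlgebra.star_eq_two_re_sub, hq]; simp
  rw [coe_quaternionAlgebraNorm, star_q, mul_neg, neg_neg]

theorem pureQuaternion_mul_add_mul {p q : ℍ[R,a,b]} (hp : p.re = 0) (hq : q.re = 0) :
    p * q + q * p =
      -((polar (quaternionAlgebraNorm a b) p q : R) : ℍ[R,a,b]) := by
  have hpq : (p + q).re = 0 := by rw [QuaternionAlgebra.re_add, hp, hq, add_zero]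
  calc p * q + q * p = (p + q) * (p + q) - p * p - q * q := by noncomm_ring
    _ = _ := by
      rw [pureQuaternion_mul_self hpq, pureQuaternion_mul_self hp, pureQuaternion_mul_self hq,
        polar, QuaternionAlgebra.coe_sub, QuaternionAlgebra.coe_sub]
      abel

theorem pureQuaternion_polar_eq_zero_of_anticomm {p q : ℍ[R,a,b]} (hp : p.re = 0) (hq : q.re = 0)
    (h : p * q + q * p = 0) : polar (quaternionAlgebraNorm a b) p q = 0 := by
  rw [pureQuaternion_mul_add_mul hp hq, neg_eq_zero] at h
  exact QuaternionAlgebra.coe_injective h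

theorem eq_mk_imK_of_polar_eq_zero (h2 : IsRegular (2 : R)) (ha : IsRegular a) (hb : IsRegular b)
    {q : ℍ[R,a,b]} (re_q : q.re = 0)
    (polar_i : polar (quaternionAlgebraNorm a b) q ⟨0, 1, 0, 0⟩ = 0)
    (polar_j : polar (quaternionAlgebraNorm a b) q ⟨0, 0, 1, 0⟩ = 0) :
    q = ⟨0, 0, 0, q.imK⟩ := by
  rw [polar_quaternionAlgebraNorm] at polar_i polar_j
  have imI_q : q.imI = 0 := by
    refine (h2.mul ha).left.mul_left_eq_zero_iff.1 ?_
    linear_combination -polar_i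
  have imJ_q : q.imJ = 0 := by
    refine (h2.mul hb).left.mul_left_eq_zero_iff.1 ?_
    linear_combination -polar_j
  ext <;> simp [re_q, imI_q, imJ_q]

theorem re_quaternionBasis_k (h2 : IsRegular (2 : R)) (B : QuaternionAlgebra.Basis ℍ[R,c,d] a 0 b) :
    B.k.re = 0 := by
  have re_comm : (B.i * B.j).re = (B.j * B.i).re := by
    simp only [QuaternionAlgebra.re_mul]; ring
  rw [B.i_mul_j, B.j_mul_i, zero_smul, zero_sub, QuaternionAlgebra.re_neg] at re_comm
  refine h2.left.mul_left_eq_zero_iff.1 ?_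
  linear_combination re_comm

/-- Left multiplication by a quaternion of norm `1`, as an isometry of the norm form. -/
noncomputable def mulLeftNormIsometryEquiv (w : ℍ[R,a,b]) (hw : quaternionAlgebraNorm a b w = 1) :
    (quaternionAlgebraNorm a b).IsometryEquiv (quaternionAlgebraNorm a b) where
  toLinearEquiv := Units.mulLeftLinearEquiv R ℍ[R,a,b]
    ⟨w, star w, by rw [← coe_quaternionAlgebraNorm, hw, QuaternionAlgebra.coe_one],
      by rw [star_comm_self', ← coe_quaternionAlgebraNorm, hw, QuaternionAlgebra.coe_one]⟩
  map_app' x := by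
    change quaternionAlgebraNorm a b (w * x) = _
    rw [quaternionAlgebraNorm_mul, hw, one_mul]

theorem exists_isometryEquiv_map_one
    (h : (quaternionAlgebraNorm a b).Equivalent (quaternionAlgebraNorm c d)) :
    ∃ g : (quaternionAlgebraNorm a b).IsometryEquiv (quaternionAlgebraNorm c d), g 1 = 1 := by
  obtain ⟨f⟩ := h
  have norm_map_one : quaternionAlgebraNorm c d (f 1) = 1 := by
    rw [f.map_app, quaternionAlgebraNorm_apply]; simp
  have norm_star_map_one : quaternionAlgebraNorm c d (star (f 1)) = 1 := by
    rw [quaternionAlgebraNorm_star, norm_map_one]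
  refine ⟨f.trans (mulLeftNormIsometryEquiv _ norm_star_map_one), ?_⟩
  change star (f 1) * f 1 = 1
  rw [star_comm_self', ← coe_quaternionAlgebraNorm, norm_map_one, QuaternionAlgebra.coe_one]

theorem exists_isometryEquiv_map_one_of_pure
    (h : (weightedSumSquares R ![-a, -b, a * b]).Equivalent
      (weightedSumSquares R ![-c, -d, c * d])) :
    ∃ g : (quaternionAlgebraNorm a b).IsometryEquiv (quaternionAlgebraNorm c d), g 1 = 1 := by
  obtain ⟨f⟩ := h
  refine ⟨(scalarPureIsometryEquiv a b).trans
    (((QuadraticMap.IsometryEquiv.refl sq).prod f).trans (scalarPureIsometryEquiv c d).symm), ?_⟩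
  change (scalarPureIsometryEquiv c d).symm
    ((QuadraticMap.IsometryEquiv.refl sq).prod f (scalarPureIsometryEquiv a b 1)) = 1
  rw [QuadraticMap.IsometryEquiv.symm_apply_eq, scalarPureIsometryEquiv_one,
    scalarPureIsometryEquiv_one]
  exact Prod.ext rfl (map_zero f.toLinearEquiv)

section UnitalIsometry

variable {g : (quaternionAlgebraNorm a b).IsometryEquiv (quaternionAlgebraNorm c d)}

/-- An isometry of norm forms, read in the coordinates given by scalars and pure quaternions. -/
noncomputable def conjScalarPure
    (g : (quaternionAlgebraNorm a b).IsometryEquiv (quaternionAlgebraNorm c d)) :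
    ((sq (R := R)).prod (weightedSumSquares R ![-a, -b, a * b])).IsometryEquiv
      (sq.prod (weightedSumSquares R ![-c, -d, c * d])) :=
  (scalarPureIsometryEquiv a b).symm.trans (g.trans (scalarPureIsometryEquiv c d))

theorem conjScalarPure_apply (q : ℍ[R,a,b]) :
    conjScalarPure g (scalarPureIsometryEquiv a b q) = scalarPureIsometryEquiv c d (g q) :=
  congrArg (fun x ↦ scalarPureIsometryEquiv c d (g x))
    ((scalarPureIsometryEquiv a b).symm_apply_apply q)

theorem conjScalarPure_one (hg : g 1 = 1) : conjScalarPure g (1, 0) = (1, 0) := by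
  rw [← scalarPureIsometryEquiv_one, conjScalarPure_apply, hg, scalarPureIsometryEquiv_one,
    scalarPureIsometryEquiv_one]

theorem pure_equivalent_of_map_one (h2 : IsRegular (2 : R)) (hg : g 1 = 1) :
    (weightedSumSquares R ![-a, -b, a * b]).Equivalent (weightedSumSquares R ![-c, -d, c * d]) :=
  equivalent_of_sq_prod_isometryEquiv h2 (conjScalarPure g) (conjScalarPure_one hg)

theorem re_isometryEquiv_apply (h2 : IsRegular (2 : R)) (hg : g 1 = 1) (q : ℍ[R,a,b]) :
    (g q).re = q.re := by
  rw [← fst_scalarPureIsometryEquiv_apply, ← conjScalarPure_apply,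
    fst_sq_prod_isometryEquiv_apply h2 _ (conjScalarPure_one hg),
    fst_scalarPureIsometryEquiv_apply]

/-- The images of `i` and `j` under an isometry fixing `1` satisfy the same relations as `i` and
`j`, so that they determine an algebra homomorphism. -/
noncomputable def isometryBasis (h2 : IsRegular (2 : R))
    (g : (quaternionAlgebraNorm a b).IsometryEquiv (quaternionAlgebraNorm c d)) (hg : g 1 = 1) :
    QuaternionAlgebra.Basis ℍ[R,c,d] a 0 b where
  i := g ⟨0, 1, 0, 0⟩
  j := g ⟨0, 0, 1, 0⟩
  k := g ⟨0, 1, 0, 0⟩ * g ⟨0, 0, 1, 0⟩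
  i_mul_i := by
    rw [pureQuaternion_mul_self (re_isometryEquiv_apply h2 hg _), g.map_app,
      quaternionAlgebraNorm_apply]
    ext <;> simp
  j_mul_j := by
    rw [pureQuaternion_mul_self (re_isometryEquiv_apply h2 hg _), g.map_app,
      quaternionAlgebraNorm_apply]
    ext <;> simp
  i_mul_j := rfl
  j_mul_i := by
    have anticomm := pureQuaternion_mul_add_mul
      (re_isometryEquiv_apply h2 hg ⟨0, 1, 0, 0⟩) (re_isometryEquiv_apply h2 hg ⟨0, 0, 1, 0⟩)
    rw [polar_isometryEquiv_apply, polar_quaternionAlgebraNorm] at anticomm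
    rw [zero_smul, zero_sub, eq_neg_iff_add_eq_zero, add_comm, anticomm]
    ext <;> simp

theorem quaternionAlgebraNorm_isometryBasis_k (h2 : IsRegular (2 : R)) (hg : g 1 = 1) :
    quaternionAlgebraNorm c d (isometryBasis h2 g hg).k = a * b := by
  change quaternionAlgebraNorm c d (g ⟨0, 1, 0, 0⟩ * g ⟨0, 0, 1, 0⟩) = a * b
  rw [quaternionAlgebraNorm_mul, g.map_app, g.map_app, quaternionAlgebraNorm_apply,
    quaternionAlgebraNorm_apply]
  ring

theorem exists_isometryBasis_k_eq (h2 : IsRegular (2 : R)) (ha : IsRegular a) (hb : IsRegular b)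
    (hg : g 1 = 1) :
    ∃ z : R, z * z = 1 ∧ (isometryBasis h2 g hg).k = g ⟨0, 0, 0, z⟩ := by
  set B := isometryBasis h2 g hg
  obtain ⟨q, map_q⟩ : ∃ q, g q = B.k := ⟨g.symm B.k, g.apply_symm_apply _⟩
  have re_k : (g q).re = 0 := map_q ▸ re_quaternionBasis_k h2 B
  have re_q : q.re = 0 := (re_isometryEquiv_apply h2 hg q).symm.trans re_k
  have polar_i : polar (quaternionAlgebraNorm a b) q ⟨0, 1, 0, 0⟩ = 0 := by
    rw [← polar_isometryEquiv_apply g]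
    refine pureQuaternion_polar_eq_zero_of_anticomm re_k (re_isometryEquiv_apply h2 hg _) ?_
    change g q * B.i + B.i * g q = 0
    rw [map_q, B.k_mul_i, B.i_mul_k]
    module
  have polar_j : polar (quaternionAlgebraNorm a b) q ⟨0, 0, 1, 0⟩ = 0 := by
    rw [← polar_isometryEquiv_apply g]
    refine pureQuaternion_polar_eq_zero_of_anticomm re_k (re_isometryEquiv_apply h2 hg _) ?_
    change g q * B.j + B.j * g q = 0
    rw [map_q, B.k_mul_j, B.j_mul_k]
    module
  have q_eq : q = ⟨0, 0, 0, q.imK⟩ := eq_mk_imK_of_polar_eq_zero h2 ha hb re_q polar_i polar_j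
  refine ⟨q.imK, ?_, by rw [← q_eq, map_q]⟩
  have norm_q : quaternionAlgebraNorm a b q = a * b := by
    rw [← g.map_app, map_q, quaternionAlgebraNorm_isometryBasis_k]
  rw [q_eq, quaternionAlgebraNorm_apply] at norm_q
  refine (ha.mul hb).left ?_
  linear_combination norm_q

theorem isometryBasis_lift_apply (h2 : IsRegular (2 : R)) (hg : g 1 = 1) {z : R}
    (hk : (isometryBasis h2 g hg).k = g ⟨0, 0, 0, z⟩) (q : ℍ[R,a,b]) :
    (isometryBasis h2 g hg).liftHom q = g ⟨q.re, q.imI, q.imJ, z * q.imK⟩ := by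
  have decomposition : (⟨q.re, q.imI, q.imJ, z * q.imK⟩ : ℍ[R,a,b]) = q.re • 1 +
      q.imI • ⟨0, 1, 0, 0⟩ + q.imJ • ⟨0, 0, 1, 0⟩ + q.imK • ⟨0, 0, 0, z⟩ := by
    ext <;> simp [mul_comm]
  rw [decomposition, QuaternionAlgebra.Basis.liftHom_apply, QuaternionAlgebra.Basis.lift, hk,
    Algebra.algebraMap_eq_smul_one, ← hg]
  simp only [← g.coe_toLinearEquiv, map_add, map_smul]
  rfl

theorem nonempty_algEquiv_of_map_one (h2 : IsRegular (2 : R)) (ha : IsRegular a)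
    (hb : IsRegular b) (hg : g 1 = 1) : Nonempty (ℍ[R,a,b] ≃ₐ[R] ℍ[R,c,d]) := by
  obtain ⟨z, z_mul_z, hk⟩ := exists_isometryBasis_k_eq h2 ha hb hg
  have scale_involutive :
      Function.Involutive fun q : ℍ[R,a,b] ↦
        (⟨q.re, q.imI, q.imJ, z * q.imK⟩ : ℍ[R,a,b]) := fun q ↦ by
    ext <;> simp [← mul_assoc, z_mul_z]
  have lift_eq : ⇑(isometryBasis h2 g hg).liftHom = g ∘ fun q ↦ ⟨q.re, q.imI, q.imJ, z * q.imK⟩ :=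
    funext (isometryBasis_lift_apply h2 hg hk)
  exact ⟨.ofBijective (isometryBasis h2 g hg).liftHom
    (lift_eq ▸ g.toLinearEquiv.bijective.comp scale_involutive.bijective)⟩

end UnitalIsometry

end QuaternionAlgebra

theorem stmt_0_general (R : Type*) [CommRing R] (h2 : IsRegular (2 : R)) (a b c d : R)
    (ha : IsRegular a) (hb : IsRegular b) :
    List.TFAE
      [Nonempty (ℍ[R,a,b] ≃ₐ[R] ℍ[R,c,d]),
       (weightedSumSquares R ![1, -a, -b, a * b]).Equivalent
        (weightedSumSquares R ![1, -c, -d, c * d]),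
       (weightedSumSquares R ![-a, -b, a * b]).Equivalent
        (weightedSumSquares R ![-c, -d, c * d])] := by
  tfae_have 1 → 3 := fun ⟨φ⟩ ↦
    pure_equivalent_of_map_one h2 (g := algEquivNormIsometryEquiv h2 φ) (map_one φ)
  tfae_have 2 → 3 := fun ⟨f⟩ ↦
    have ⟨_, hg⟩ := exists_isometryEquiv_map_one
      ⟨(coordIsometryEquiv a b).trans (f.trans (coordIsometryEquiv c d).symm)⟩
    pure_equivalent_of_map_one h2 hg
  tfae_have 3 → 2 := fun h ↦
    have ⟨g, _⟩ := exists_isometryEquiv_map_one_of_pure h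
    ⟨(coordIsometryEquiv a b).symm.trans (g.trans (coordIsometryEquiv c d))⟩
  tfae_have 3 → 1 := fun h ↦
    have ⟨_, hg⟩ := exists_isometryEquiv_map_one_of_pure h
    nonempty_algEquiv_of_map_one h2 ha hb hg
  tfae_finish

theorem stmt_0 (K : Type*) [Field K] (hK : ringChar K ≠ 2)
    (a b c d : K) (ha : a ≠ 0) (hb : b ≠ 0) (hc : c ≠ 0) (hd : d ≠ 0) :
    List.TFAE
      [Nonempty (ℍ[K, a, b] ≃ₐ[K] ℍ[K, c, d]),
       (quaternionNormForm K a b).Equivalent (quaternionNormForm K c d),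
       (quaternionPureNormForm K a b).Equivalent (quaternionPureNormForm K c d)] :=
  stmt_0_general K (.of_ne_zero (Ring.two_ne_zero hK)) a b c d (.of_ne_zero ha) (.of_ne_zero hb)
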